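/- Let u ∈ F₂ and let ψ be a chain of type (C1) containing at least ‖u‖+1 factors of σ. Then: (i) if ‖σψ(u)‖ = ‖ψ(u)‖, then ‖σ^{i+1}ψ(u)‖ = ‖σ^{i}ψ(u)‖ for every integer i ≥ 0; and (ii) if ‖σ^{j+1}ψ(u)‖ = ‖σ^{j}ψ(u)‖ for some integer j ≥ 0, then ‖σψ(u)‖ = ‖ψ(u)‖. -/

import Mathlib

noncomputable section

/-- The free group of rank two. -/
abbrev F : Type := FreeGroup (Fin 2)

/-- The generator `a`. -/
def ga : F := FreeGroup.of 0

/-- The generator `b`. -/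
def gb : F := FreeGroup.of 1

/-- Build an automorphism of `F` from images of the generators together with
an explicit inverse. -/
def mkAut (x y xi yi : F)
    (h1 : FreeGroup.lift ![xi, yi] x = ga)
    (h2 : FreeGroup.lift ![xi, yi] y = gb)
    (h3 : FreeGroup.lift ![x, y] xi = ga)
    (h4 : FreeGroup.lift ![x, y] yi = gb) : MulAut F :=
  MonoidHom.toMulEquiv (FreeGroup.lift ![x, y]) (FreeGroup.lift ![xi, yi])
    (by
      ext i
      fin_cases i
      · simpa [ga] using h1
      · simpa [gb] using h2)
    (by
      ext i
      fin_cases i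
      · simpa [ga] using h3
      · simpa [gb] using h4)

/-- `σ : a ↦ ab, b ↦ b`. -/
def σ : MulAut F :=
  mkAut (ga * gb) gb (ga * gb⁻¹) gb
    (by simp [ga, gb]) (by simp [ga, gb]) (by simp [ga, gb]) (by simp [ga, gb])

/-- `τ : a ↦ a, b ↦ ba`. -/
def τ : MulAut F :=
  mkAut ga (gb * ga) ga (gb * ga⁻¹)
    (by simp [ga, gb]) (by simp [ga, gb]) (by simp [ga, gb]) (by simp [ga, gb])

/-- `δ₁ : a ↦ b⁻¹ab, b ↦ b`. -/
def δ₁ : MulAut F :=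
  mkAut (gb⁻¹ * ga * gb) gb (gb * ga * gb⁻¹) gb
    (by simp [ga, gb, mul_assoc]) (by simp [ga, gb]) (by simp [ga, gb, mul_assoc]) (by simp [ga, gb])

/-- `δ₂ : a ↦ bab⁻¹, b ↦ b`. -/
def δ₂ : MulAut F :=
  mkAut (gb * ga * gb⁻¹) gb (gb⁻¹ * ga * gb) gb
    (by simp [ga, gb, mul_assoc]) (by simp [ga, gb]) (by simp [ga, gb, mul_assoc]) (by simp [ga, gb])

/-- `δ₃ : a ↦ a, b ↦ a⁻¹ba`. -/
def δ₃ : MulAut F :=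
  mkAut ga (ga⁻¹ * gb * ga) ga (ga * gb * ga⁻¹)
    (by simp [ga, gb]) (by simp [ga, gb, mul_assoc]) (by simp [ga, gb]) (by simp [ga, gb, mul_assoc])

/-- `δ₄ : a ↦ a, b ↦ aba⁻¹`. -/
def δ₄ : MulAut F :=
  mkAut ga (ga * gb * ga⁻¹) ga (ga⁻¹ * gb * ga)
    (by simp [ga, gb]) (by simp [ga, gb, mul_assoc]) (by simp [ga, gb]) (by simp [ga, gb, mul_assoc])

/-- `π : a ↦ b, b ↦ a⁻¹`. -/
def pi' : MulAut F :=
  mkAut gb ga⁻¹ gb⁻¹ ga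
    (by simp [ga, gb]) (by simp [ga, gb]) (by simp [ga, gb]) (by simp [ga, gb])

/-- Word length of (the reduced word representing) an element of `F`. -/
def len (w : F) : ℕ := w.toWord.length

/-- Cyclic length: minimal word length among all conjugates. -/
def cyclen (w : F) : ℕ := sInf {n | ∃ g : F, len (g * w * g⁻¹) = n}

/-- The chain `τ^{m_k}σ^{l_k}⋯τ^{m_1}σ^{l_1}` of type (C1) determined by the list
`[(l_k, m_k), …, (l_1, m_1)]` of pairs of exponents. -/
def chainC1 (c : List (ℕ × ℕ)) : MulAut F :=
  (c.map fun p => τ ^ p.2 * σ ^ p.1).prod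

/-- The chain `τ^{-m_k}σ^{-l_k}⋯τ^{-m_1}σ^{-l_1}` of type (C2) determined by the list
`[(l_k, m_k), …, (l_1, m_1)]` of pairs of exponents. -/
def chainC2 (c : List (ℕ × ℕ)) : MulAut F :=
  (c.map fun p => (τ ^ p.2)⁻¹ * (σ ^ p.1)⁻¹).prod

/-- Number of factors of `σ` in a chain. -/
def sigmaCount (c : List (ℕ × ℕ)) : ℕ := (c.map Prod.fst).sum

/-- Number of factors of `τ` in a chain. -/
def tauCount (c : List (ℕ × ℕ)) : ℕ := (c.map Prod.snd).sum

/-- The length `Σ (l_i + m_i)` of a chain. -/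
def chainLen (c : List (ℕ × ℕ)) : ℕ := sigmaCount c + tauCount c

/-- A Whitehead automorphism of type (W1): it permutes `{a, a⁻¹, b, b⁻¹}`. -/
def IsW1 (β : MulAut F) : Prop :=
  β ga ∈ ({ga, ga⁻¹, gb, gb⁻¹} : Set F) ∧ β gb ∈ ({ga, ga⁻¹, gb, gb⁻¹} : Set F)

/-- A chain of type (C1). -/
def IsC1 (φ : MulAut F) : Prop := ∃ c : List (ℕ × ℕ), c ≠ [] ∧ φ = chainC1 c

/-- A chain of type (C2). -/
def IsC2 (φ : MulAut F) : Prop := ∃ c : List (ℕ × ℕ), c ≠ [] ∧ φ = chainC2 c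

/-- A positive element: a product of the generators `a` and `b`. -/
def IsPositive (w : F) : Prop := w ∈ Submonoid.closure ({ga, gb} : Set F)

/-- The four automorphisms `δ₁, δ₂, δ₃, δ₄`. -/
def δIdx : Fin 4 → MulAut F := ![δ₁, δ₂, δ₃, δ₄]


/-! ### Cyclic length -/

theorem cr_iff (L : List (Fin 2 × Bool)) :
    FreeGroup.IsCyclicallyReduced L ↔ FreeGroup.IsReduced (L ++ L) := by
  unfold FreeGroup.IsCyclicallyReduced FreeGroup.IsReduced
  rw [List.isChain_append]
  tauto

theorem len_mul_le (x y : F) : len (x * y) ≤ len x + len y := FreeGroup.norm_mul_le x y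

theorem len_pow_le (x : F) (n : ℕ) : len (x ^ n) ≤ n * len x := by
  induction n with
  | zero => simp [len]
  | succ n ih =>
    rw [pow_succ]
    have := len_mul_le (x ^ n) x
    nlinarith

theorem mk_pow (L : List (Fin 2 × Bool)) (n : ℕ) :
    (FreeGroup.mk L) ^ n = FreeGroup.mk (List.replicate n L).flatten := by
  induction n with
  | zero => simp [FreeGroup.one_eq_mk]
  | succ n ih => rw [pow_succ', ih, List.replicate_succ, List.flatten_cons, FreeGroup.mul_mk]

theorem cyclen_eq_of_isConj {v w : F} (h : IsConj v w) : cyclen v = cyclen w := by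
  obtain ⟨c, hc⟩ := isConj_iff.1 h
  subst hc
  unfold cyclen
  congr 1
  ext n
  constructor
  · rintro ⟨g, hg⟩
    exact ⟨g * c⁻¹, by rw [← hg]; congr 1; group⟩
  · rintro ⟨g, hg⟩
    exact ⟨g * c, by rw [← hg]; congr 1; group⟩

theorem len_mk_of_reduced {L : List (Fin 2 × Bool)} (h : FreeGroup.IsReduced L) :
    len (FreeGroup.mk L) = L.length := by
  unfold len
  rw [FreeGroup.toWord_mk, h.reduce_eq]

theorem cyclen_mk {L : List (Fin 2 × Bool)} (h : FreeGroup.IsCyclicallyReduced L) :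
    cyclen (FreeGroup.mk L) = L.length := by
  apply le_antisymm
  · apply Nat.sInf_le
    exact ⟨1, by simpa using len_mk_of_reduced h.isReduced⟩
  · apply le_csInf
    · exact ⟨_, 1, rfl⟩
    · rintro m ⟨g, rfl⟩
      by_contra hlt
      push Not at hlt
      set w := FreeGroup.mk L with hw
      have key : ∀ n : ℕ, n * L.length ≤ len g⁻¹ + n * len (g * w * g⁻¹) + len g := by
        intro n
        have h1 : len (w ^ n) = n * L.length := by
          rw [hw, mk_pow, len_mk_of_reduced (h.flatten_replicate n).isReduced]
          simp
        have h2 : w ^ n = g⁻¹ * (g * w * g⁻¹) ^ n * g := by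
          rw [conj_pow]; group
        rw [← h1]
        conv_lhs => rw [h2]
        have := len_mul_le (g⁻¹ * (g * w * g⁻¹) ^ n) g
        have := len_mul_le g⁻¹ ((g * w * g⁻¹) ^ n)
        have := len_pow_le (g * w * g⁻¹) n
        omega
      have := key (len g⁻¹ + len g + 1)
      nlinarith

theorem exists_cr (u : F) : ∃ L, FreeGroup.IsCyclicallyReduced L ∧ IsConj u (FreeGroup.mk L) := by
  refine ⟨FreeGroup.reduceCyclically u.toWord,
    FreeGroup.reduceCyclically.isCyclicallyReduced FreeGroup.isReduced_toWord, ?_⟩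
  have := FreeGroup.reduceCyclically.conj_conjugator_reduceCyclically u.toWord
  apply IsConj.symm
  rw [isConj_iff]
  refine ⟨FreeGroup.mk (FreeGroup.reduceCyclically.conjugator u.toWord), ?_⟩
  rw [FreeGroup.inv_mk, FreeGroup.mul_mk, FreeGroup.mul_mk, this, FreeGroup.mk_toWord]

theorem isConj_rot (K M : List (Fin 2 × Bool)) :
    IsConj (FreeGroup.mk (K ++ M)) (FreeGroup.mk (M ++ K)) := by
  rw [← FreeGroup.mul_mk, ← FreeGroup.mul_mk, isConj_iff]
  exact ⟨(FreeGroup.mk K)⁻¹, by group⟩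

theorem isConj_aut (φ : MulAut F) {v w : F} (h : IsConj v w) : IsConj (φ v) (φ w) :=
  φ.toMonoidHom.map_isConj h

/-! ### Action on letters -/

theorem σ_a : σ ga = ga * gb := by
  show FreeGroup.lift ![ga * gb, gb] ga = _
  simp [ga]
theorem σ_b : σ gb = gb := by
  show FreeGroup.lift ![ga * gb, gb] gb = _
  simp [gb]
theorem τ_a : τ ga = ga := by
  show FreeGroup.lift ![ga, gb * ga] ga = _
  simp [ga]
theorem τ_b : τ gb = gb * ga := by
  show FreeGroup.lift ![ga, gb * ga] gb = _
  simp [gb]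

theorem mk_a : FreeGroup.mk [((0 : Fin 2), true)] = ga := rfl
theorem mk_b : FreeGroup.mk [((1 : Fin 2), true)] = gb := rfl
theorem mk_A : FreeGroup.mk [((0 : Fin 2), false)] = ga⁻¹ := rfl
theorem mk_B : FreeGroup.mk [((1 : Fin 2), false)] = gb⁻¹ := rfl
theorem mk_cons (x : Fin 2 × Bool) (L : List (Fin 2 × Bool)) :
    FreeGroup.mk (x :: L) = FreeGroup.mk [x] * FreeGroup.mk L := by
  rw [FreeGroup.mul_mk]; rfl

theorem lt_cases {P : Fin 2 × Bool → Prop} (ha : P (0, true)) (hA : P (0, false))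
    (hb : P (1, true)) (hB : P (1, false)) (x : Fin 2 × Bool) : P x := by
  obtain ⟨i, e⟩ := x
  fin_cases i <;> cases e <;> assumption

/-! ### Gap lists -/

/-- The word `b^n`. -/
def bpow (n : ℤ) : List (Fin 2 × Bool) := List.replicate n.natAbs (1, decide (0 ≤ n))

/-- The word of a gap list. -/
def fl : Bool → List (ℤ × Bool) → List (Fin 2 × Bool)
  | _, [] => []
  | e, (n, t) :: G => (0, e) :: (bpow n ++ fl t G)

/-- The final sign. -/
def fin' : Bool → List (ℤ × Bool) → Bool
  | e, [] => e
  | _, (_, t) :: G => fin' t G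

/-- Reducedness of a gap list. -/
def ok : Bool → List (ℤ × Bool) → Prop
  | _, [] => True
  | e, (n, t) :: G => (e ≠ t → n ≠ 0) ∧ ok t G

/-- The shift of one gap. -/
def dl : Bool → Bool → ℤ
  | true, true => 1
  | false, false => -1
  | _, _ => 0

/-- The shift of a gap list: the action of `σ`. -/
def sh : Bool → List (ℤ × Bool) → List (ℤ × Bool)
  | _, [] => []
  | e, (n, t) :: G => (n + dl e t, t) :: sh t G

/-- negativity of one gap. -/
def ng (e : Bool) (n : ℤ) (t : Bool) : ℕ := (-(dl e t * n)).toNat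

/-- total negativity. -/
def NG : Bool → List (ℤ × Bool) → ℕ
  | _, [] => 0
  | e, (n, t) :: G => ng e n t + NG t G

/-- number of non-neutral gaps. -/
def KG : Bool → List (ℤ × Bool) → ℕ
  | _, [] => 0
  | e, (_, t) :: G => (dl e t).natAbs + KG t G

theorem fin'_sh (e : Bool) (G) : fin' e (sh e G) = fin' e G := by
  induction G generalizing e with
  | nil => rfl
  | cons g G ih => exact ih _

theorem ok_sh (e : Bool) (G) (h : ok e G) : ok e (sh e G) := by
  induction G generalizing e with
  | nil => trivial
  | cons g G ih =>
    obtain ⟨n, t⟩ := g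
    refine ⟨?_, ih _ h.2⟩
    have := h.1
    cases e <;> cases t <;> simp_all [dl]

theorem KG_sh (e : Bool) (G) : KG e (sh e G) = KG e G := by
  induction G generalizing e with
  | nil => rfl
  | cons g G ih => simp [KG, sh, ih]

theorem NG_sh_le (e : Bool) (G) : NG e (sh e G) ≤ NG e G := by
  induction G generalizing e with
  | nil => rfl
  | cons g G ih =>
    obtain ⟨n, t⟩ := g
    have := ih t
    simp only [NG, sh]
    have : ng e (n + dl e t) t ≤ ng e n t := by
      cases e <;> cases t <;> simp only [ng, dl] <;> omega
    omega

theorem NG_sh_lt (e : Bool) (G) (h : 0 < NG e G) : NG e (sh e G) < NG e G := by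
  induction G generalizing e with
  | nil => simp [NG] at h
  | cons g G ih =>
    obtain ⟨n, t⟩ := g
    have h1 := ih t
    have h2 := NG_sh_le t G
    simp only [NG, sh] at h ⊢
    have : ng e (n + dl e t) t ≤ ng e n t ∧ (0 < ng e n t → ng e (n + dl e t) t < ng e n t) := by
      cases e <;> cases t <;> simp only [ng, dl] <;> omega
    omega

theorem length_sh (e : Bool) (G) (h : NG e G = 0) :
    (fl e (sh e G)).length = (fl e G).length + KG e G := by
  induction G generalizing e with
  | nil => rfl
  | cons g G ih =>
    obtain ⟨n, t⟩ := g
    simp only [NG] at h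
    have h1 := ih t (by omega)
    simp only [fl, sh, KG, bpow, List.length_cons, List.length_append, List.length_replicate, h1]
    have : ng e n t = 0 → (n + dl e t).natAbs = n.natAbs + (dl e t).natAbs := by
      cases e <;> cases t <;> simp only [ng, dl] <;> omega
    have := this (by omega)
    omega

theorem NG_le_length (e : Bool) (G) : NG e G ≤ (fl e G).length := by
  induction G generalizing e with
  | nil => simp [NG]
  | cons g G ih =>
    obtain ⟨n, t⟩ := g
    have := ih t
    simp only [fl, NG, bpow, List.length_cons, List.length_append, List.length_replicate]
    have : ng e n t ≤ n.natAbs := by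
      clear * -
      cases e <;> cases t <;> simp only [ng, dl] <;> omega
    omega

theorem fl_red (e : Bool) (G) (h : ok e G) (X : List (Fin 2 × Bool))
    (hX : FreeGroup.IsReduced ((0, fin' e G) :: X)) :
    FreeGroup.IsReduced (fl e G ++ (0, fin' e G) :: X) ∧
    ∃ Y, fl e G ++ (0, fin' e G) :: X = (0, e) :: Y := by
  induction G generalizing e with
  | nil => exact ⟨hX, X, rfl⟩
  | cons g G ih =>
    obtain ⟨n, t⟩ := g
    obtain ⟨h1, Y, hY⟩ := ih t h.2 hX
    refine ⟨?_, _, rfl⟩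
    simp only [fl, fin', List.cons_append, List.append_assoc]
    rw [hY] at h1 ⊢
    have ha := h.1
    unfold FreeGroup.IsReduced at *
    rw [List.isChain_cons, List.isChain_append]
    refine ⟨?_, ?_, h1, ?_⟩
    · intro y hy
      by_cases hn : n = 0
      · subst hn
        simp [bpow] at hy
        subst hy
        simpa using ha
      · obtain ⟨k, hk⟩ : ∃ k, n.natAbs = k + 1 := ⟨n.natAbs - 1, by omega⟩
        simp [bpow, hk, List.replicate_succ] at hy
        subst hy
        simp
    · exact List.isChain_replicate_of_rel _ (by simp)
    · intro x hx y hy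
      have := List.mem_of_getLast? hx
      simp [bpow] at this hy
      subst hy
      rw [this.2]
      simp

theorem fl_cr (e : Bool) (G) (h : ok e G) (hf : fin' e G = e) :
    FreeGroup.IsCyclicallyReduced (fl e G) := by
  have h1 := fl_red e G h [] (by simp [FreeGroup.IsReduced])
  obtain ⟨h1, Y, hY⟩ := h1
  rw [hf] at h1
  cases G with
  | nil => simp [fl]
  | cons g G =>
    obtain ⟨n, t⟩ := g
    rw [cr_iff]
    simp only [fl, fin'] at h1 hf ⊢
    have := fl_red e ((n, t) :: G) h (bpow n ++ fl t G) (by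
      simp only [fin', hf]
      exact h1.infix ⟨[], [(0, e)], by simp⟩)
    simpa [fl, fin', hf] using this.1

/-- Correction. -/
def lam : Bool → F
  | true => 1
  | false => gb⁻¹

theorem bpow_mk (n : ℤ) : FreeGroup.mk (bpow n) = gb ^ n := by
  unfold bpow
  rcases n with k | k
  · simp only [Int.ofNat_eq_natCast, Int.natAbs_natCast, zpow_natCast]
    rw [← mk_b, mk_pow]
    simp
  · rw [zpow_negSucc, ← inv_pow, ← mk_B, mk_pow]
    simp

theorem σ_fl (e : Bool) (G) :
    σ (FreeGroup.mk (fl e G)) = lam e * FreeGroup.mk (fl e (sh e G)) * (lam (fin' e G))⁻¹ := by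
  induction G generalizing e with
  | nil => simp [fl, sh, fin', ← FreeGroup.one_eq_mk]
  | cons g G ih =>
    obtain ⟨n, t⟩ := g
    simp only [fl, sh, fin']
    rw [mk_cons (0, e) (bpow n ++ _), mk_cons (0, e) (bpow (n + dl e t) ++ _),
      ← FreeGroup.mul_mk, ← FreeGroup.mul_mk, map_mul, map_mul, ih,
      bpow_mk, bpow_mk, map_zpow, σ_b]
    have hc : gb * gb ^ n = gb ^ n * gb := Commute.self_zpow gb n
    generalize lam (fin' t G) = q
    cases e <;> cases t <;> simp [mk_a, mk_A, lam, dl, σ_a, zpow_add, mul_assoc]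
    all_goals
      simp only [← mul_assoc]
      rw [hc]
      try simp

/-! ### The image of a path of letters under `τ` -/

/-- output of a junction. -/
def gj (x y : Fin 2 × Bool) : List (Fin 2 × Bool) :=
  (if x = (0, true) then (if y = (1, false) then [] else [(0, true)])
    else if x = (1, true) then (if y = (0, false) then [(1, true)] else [(1, true), (0, true)])
    else []) ++
  (if y = (0, false) then (if x = (1, true) then [] else [(0, false)])
    else if y = (1, false) then (if x = (0, true) then [(1, false)] else [(0, false), (1, false)])
    else [])

theorem gj_aa : gj (0, true) (0, true) = [(0, true)] := by decide
theorem gj_ab : gj (0, true) (1, true) = [(0, true)] := by decide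
theorem gj_aB : gj (0, true) (1, false) = [(1, false)] := by decide
theorem gj_ba : gj (1, true) (0, true) = [(1, true), (0, true)] := by decide
theorem gj_bb : gj (1, true) (1, true) = [(1, true), (0, true)] := by decide
theorem gj_bA : gj (1, true) (0, false) = [(1, true)] := by decide
theorem gj_Ab : gj (0, false) (1, true) = [] := by decide
theorem gj_AA : gj (0, false) (0, false) = [(0, false)] := by decide
theorem gj_AB : gj (0, false) (1, false) = [(0, false), (1, false)] := by decide
theorem gj_Ba : gj (1, false) (0, true) = [] := by decide
theorem gj_BA : gj (1, false) (0, false) = [(0, false)] := by decide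
theorem gj_BB : gj (1, false) (1, false) = [(0, false), (1, false)] := by decide

/-- output of a path. -/
def JJ : Fin 2 × Bool → List (Fin 2 × Bool) → List (Fin 2 × Bool)
  | _, [] => []
  | x, y :: L => gj x y ++ JJ y L

theorem JJ_append (x : Fin 2 × Bool) (L) (y : Fin 2 × Bool) (M) :
    JJ x (L ++ y :: M) = JJ x (L ++ [y]) ++ JJ y M := by
  induction L generalizing x with
  | nil => simp [JJ]
  | cons z L ih => simp only [List.cons_append, JJ, List.append_assoc]; rw [ih]

/-- left part of the image of a letter. -/
def lpt (x : Fin 2 × Bool) : F :=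
  if x = (0, false) then ga⁻¹ else if x = (1, false) then ga⁻¹ * gb⁻¹ else 1

/-- right part of the image of a letter. -/
def rpt (x : Fin 2 × Bool) : F :=
  if x = (0, true) then ga else if x = (1, true) then gb * ga else 1

theorem τ_letter (x : Fin 2 × Bool) : τ (FreeGroup.mk [x]) = lpt x * rpt x := by
  induction x using lt_cases <;> simp [mk_a, mk_b, mk_A, mk_B, τ_a, τ_b, lpt, rpt]

theorem gj_mk (x y : Fin 2 × Bool) : FreeGroup.mk (gj x y) = rpt x * lpt y := by
  induction x using lt_cases <;> induction y using lt_cases <;>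
    simp [gj, lpt, rpt, mk_cons _ [_, _, _], mk_cons _ [_, _], mk_cons _ [_], mk_a, mk_b, mk_A, mk_B, ← FreeGroup.one_eq_mk, mul_assoc]

theorem JJ_mk (x : Fin 2 × Bool) (L) (z : Fin 2 × Bool) :
    FreeGroup.mk (JJ x (L ++ [z])) = rpt x * τ (FreeGroup.mk L) * lpt z := by
  induction L generalizing x with
  | nil => simp [JJ, gj_mk, ← FreeGroup.one_eq_mk]
  | cons y L ih =>
    simp only [List.cons_append, JJ]
    rw [← FreeGroup.mul_mk, gj_mk, ih, mk_cons, map_mul, τ_letter]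
    simp only [mul_assoc]

theorem JJ_conj (x : Fin 2 × Bool) (L) :
    IsConj (τ (FreeGroup.mk (x :: L))) (FreeGroup.mk (JJ x (L ++ [x]))) := by
  rw [JJ_mk, isConj_iff]
  refine ⟨(lpt x)⁻¹, ?_⟩
  rw [mk_cons, map_mul, τ_letter]
  group

/-- allowed first output letters. -/
def okh (y h : Fin 2 × Bool) : Bool :=
  if y = (0, true) then h = (0, true) ∨ h = (1, false)
  else if y = (1, true) then h = (1, true)
  else if y = (0, false) then h = (1, true) ∨ h = (0, false)
  else h ≠ (1, true)

theorem okh_step : ∀ x y : Fin 2 × Bool, (x.1 = y.1 → x.2 = y.2) →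
    (List.IsChain (fun a b : Fin 2 × Bool => a.1 = b.1 → a.2 = b.2) (gj x y) ∧
    (∀ h ∈ (gj x y).head?, okh x h = true) ∧
    (gj x y = [] → ∀ h, okh y h = true → okh x h = true) ∧
    (∀ a ∈ (gj x y).getLast?, ∀ h, okh y h = true → a.1 = h.1 → a.2 = h.2)) := by
  decide

theorem JJ_red (x : Fin 2 × Bool) (L) (h : FreeGroup.IsReduced (x :: L)) :
    FreeGroup.IsReduced (JJ x L) ∧ ∀ t ∈ (JJ x L).head?, okh x t = true := by
  induction L generalizing x with
  | nil => simp [JJ, FreeGroup.IsReduced]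
  | cons y L ih =>
    unfold FreeGroup.IsReduced at *
    rw [List.isChain_cons_cons] at h
    obtain ⟨h1, h2⟩ := ih y h.2
    obtain ⟨s1, s2, s3, s4⟩ := okh_step x y h.1
    simp only [JJ]
    constructor
    · rw [List.isChain_append]
      exact ⟨s1, h1, fun a ha t ht => s4 a ha t (h2 t ht)⟩
    · intro t ht
      rw [List.head?_append] at ht
      by_cases hg : gj x y = []
      · rw [hg] at ht
        exact s3 hg t (h2 t (by simpa using ht))
      · obtain ⟨a, M, hM⟩ := List.exists_cons_of_ne_nil hg
        apply s2
        rw [hM] at ht ⊢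
        simpa using ht

/-! ### Counting negativity along a word -/

/-- is the b-letter `f` negative after the a-letter `s`. -/
def pd (s : Option Bool) (f : Bool) : ℕ := if s = some (!f) then 1 else 0

/-- Scan. -/
def FF : Option Bool → ℕ → List (Fin 2 × Bool) → ℕ
  | _, _, [] => 0
  | s, c, (i, e) :: V =>
    if i = 0 then (if s = some e then c else 0) + FF (some e) 0 V else FF s (c + pd s e) V

theorem FF_a (s c e V) : FF s c ((0, e) :: V) = (if s = some e then c else 0) + FF (some e) 0 V := by
  simp [FF]
theorem FF_b (s c e V) : FF s c ((1, e) :: V) = FF s (c + pd s e) V := by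
  simp [FF]

theorem FF_split (s c A e B) :
    FF s c (A ++ (0, e) :: B) = FF s c (A ++ [(0, e)]) + FF (some e) 0 B := by
  induction A generalizing s c with
  | nil => simp [FF]
  | cons x A ih =>
    obtain ⟨i, f⟩ := x
    simp only [List.cons_append, FF]
    split_ifs <;> rw [ih] <;> omega

theorem FF_rep (s c k f V) :
    FF s c (List.replicate k (1, f) ++ V) = FF s (c + k * pd s f) V := by
  induction k generalizing c with
  | zero => simp
  | succ k ih =>
    rw [List.replicate_succ, List.cons_append, FF_b, ih]
    congr 1
    ring

theorem FF_fl (e : Bool) (G) : ∃ Y, fl e G ++ [(0, fin' e G)] = (0, e) :: Y ∧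
    FF (some e) 0 Y = NG e G := by
  induction G generalizing e with
  | nil => exact ⟨[], rfl, rfl⟩
  | cons g G ih =>
    obtain ⟨n, t⟩ := g
    obtain ⟨Y, h1, h2⟩ := ih t
    refine ⟨bpow n ++ (0, t) :: Y, by simp [fl, fin', h1], ?_⟩
    unfold bpow
    rw [FF_rep, FF_a, h2, NG]
    congr 1
    clear h1 h2 ih
    by_cases hn : 0 ≤ n <;> cases e <;> cases t <;> simp [hn, pd, ng, dl] <;> omega

/-- The correction term. -/
def cor (y : Fin 2 × Bool) (s' : Option Bool) : ℕ :=
  if y = (1, false) ∧ s' = some true then 1 else 0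

/-- The invariant. -/
def SInv (y : Fin 2 × Bool) (s' : Option Bool) (c' : ℕ) (s : Option Bool) (c : ℕ) : Prop :=
  (y = (0, true) → s = some true ∧ c = 0) ∧ (y = (0, false) → s = some false ∧ c = 0) ∧
  (y = (1, true) → s' = some false → s = some false ∧ 1 ≤ c) ∧
  (y = (1, false) → s' = some true → s = some true ∧ 1 ≤ c ∧ 1 ≤ c')

/-- Booked amount and state after a word. -/
def scanSt : Option Bool → ℕ → List (Fin 2 × Bool) → ℕ × Option Bool × ℕ
  | s, c, [] => (0, s, c)
  | s, c, (i, e) :: V =>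
    if i = 0 then ((if s = some e then c else 0) + (scanSt (some e) 0 V).1, (scanSt (some e) 0 V).2)
    else scanSt s (c + pd s e) V

theorem FF_append (s c A B) :
    FF s c (A ++ B) = (scanSt s c A).1 + FF (scanSt s c A).2.1 (scanSt s c A).2.2 B := by
  induction A generalizing s c with
  | nil => simp [scanSt]
  | cons x A ih =>
    obtain ⟨i, f⟩ := x
    simp only [List.cons_append, FF, scanSt]
    split_ifs <;> rw [ih] <;> simp <;> omega

theorem SInv_step (y z : Fin 2 × Bool) (hr : y.1 = z.1 → y.2 = z.2) (s' c' s c)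
    (hI : SInv y s' c' s c) :
    SInv z (scanSt s' c' (gj y z)).2.1 (scanSt s' c' (gj y z)).2.2 (scanSt s c [z]).2.1 (scanSt s c [z]).2.2 ∧
    (scanSt s' c' (gj y z)).1 + (scanSt s' c' (gj y z)).2.2 + cor y s' ≤
      c' + (scanSt s c [z]).1 + cor z (scanSt s' c' (gj y z)).2.1 := by
  rcases s' with _ | _ | _ <;>
  induction y using lt_cases <;> induction z using lt_cases <;>
  simp [SInv] at hI hr <;>
  simp [gj_aa, gj_ab, gj_aB, gj_ba, gj_bb, gj_bA, gj_Ab, gj_AA, gj_AB, gj_Ba, gj_BA, gj_BB,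
    scanSt, SInv, cor, pd] <;> simp [hI] <;> omega

theorem FF_JJ (y : Fin 2 × Bool) (L) (h : FreeGroup.IsReduced (y :: L)) (s' c' s c)
    (hI : SInv y s' c' s c) : FF s' c' (JJ y L) + cor y s' ≤ c' + FF s c L := by
  induction L generalizing y s' c' s c with
  | nil =>
    simp only [JJ, FF, cor]
    obtain ⟨-, -, -, h4⟩ := hI
    split_ifs with hc
    · have := h4 hc.1 hc.2
      omega
    · omega
  | cons z L ih =>
    unfold FreeGroup.IsReduced at h ih
    rw [List.isChain_cons_cons] at h
    obtain ⟨hr, h⟩ := h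
    obtain ⟨h1, h2⟩ := SInv_step y z hr s' c' s c hI
    have := ih z h _ _ _ _ h1
    have e1 := FF_append s' c' (gj y z) (JJ z L)
    have e2 := FF_append s c [z] L
    simp only [JJ]
    rw [e1, show z :: L = [z] ++ L from rfl, e2]
    omega

/-! ### From words to gap lists -/

theorem bpow_snoc (n : ℤ) (f : Bool) (h : FreeGroup.IsReduced (bpow n ++ [(1, f)])) :
    ∃ m, bpow n ++ [(1, f)] = bpow m := by
  by_cases hn : n = 0
  · subst hn
    cases f
    · exact ⟨-1, by simp [bpow]⟩
    · exact ⟨1, by simp [bpow]⟩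
  · have hf : decide (0 ≤ n) = f := by
      unfold FreeGroup.IsReduced at h
      rw [List.isChain_append] at h
      have h3 := h.2.2 (1, decide (0 ≤ n)) (by
        obtain ⟨k, hk⟩ : ∃ k, n.natAbs = k + 1 := ⟨n.natAbs - 1, by omega⟩
        simp [bpow, hk, List.replicate_succ', List.getLast?_append]) (1, f) (by simp)
      simpa using h3
    subst hf
    by_cases h0 : 0 ≤ n
    · refine ⟨n + 1, ?_⟩
      have : (n + 1).natAbs = n.natAbs + 1 := by omega
      have h1 : 0 ≤ n + 1 := by omega
      simp [bpow, this, h0, h1, List.replicate_succ']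
    · refine ⟨n - 1, ?_⟩
      have : (n - 1).natAbs = n.natAbs + 1 := by omega
      have h1 : ¬ (0 ≤ n - 1) := by omega
      simp only [bpow, this, h0, h1, List.replicate_succ']

theorem to_gap (L : List (Fin 2 × Bool)) (e : Bool) (n : ℤ) (z : Bool)
    (h : FreeGroup.IsReduced ((0, e) :: (bpow n ++ (L ++ [(0, z)])))) :
    ∃ G, ok e G ∧ fin' e G = z ∧
      fl e G ++ [(0, z)] = (0, e) :: (bpow n ++ (L ++ [(0, z)])) := by
  induction L generalizing e n with
  | nil =>
    refine ⟨[(n, z)], ⟨?_, trivial⟩, rfl, by simp [fl]⟩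
    rintro hez rfl
    simp [bpow, FreeGroup.IsReduced] at h
    exact hez h
  | cons x L ih =>
    obtain ⟨i, f⟩ := x
    by_cases hi : i = 0
    · subst hi
      obtain ⟨G, h1, h2, h3⟩ := ih f 0 (by
        exact h.infix ⟨(0, e) :: bpow n, [], by simp [bpow]⟩)
      refine ⟨(n, f) :: G, ⟨?_, h1⟩, h2, ?_⟩
      · rintro hez rfl
        simp [bpow, FreeGroup.IsReduced] at h
        exact hez h.1
      · simp only [fl, List.cons_append, List.append_assoc, h3]
        simp [bpow]
    · have hi : i = 1 := by omega
      subst hi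
      obtain ⟨m, hm⟩ := bpow_snoc n f (h.infix ⟨[(0, e)], L ++ [(0, z)], by simp⟩)
      have e1 : bpow n ++ ((1, f) :: L ++ [(0, z)]) = bpow m ++ (L ++ [(0, z)]) := by
        rw [← hm]; simp
      rw [e1] at h ⊢
      exact ih e m h

theorem all_b (L : List (Fin 2 × Bool)) (h : ∀ x ∈ L, x.1 ≠ 0) :
    ∃ n : ℤ, FreeGroup.mk L = gb ^ n := by
  induction L with
  | nil => exact ⟨0, by simp [FreeGroup.one_eq_mk]⟩
  | cons x L ih =>
    obtain ⟨n, hn⟩ := ih (fun y hy => h y (by simp [hy]))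
    have hx := h x (by simp)
    obtain ⟨i, f⟩ := x
    have hi : i = 1 := by simp at hx; omega
    subst hi
    rw [mk_cons, hn]
    cases f
    · exact ⟨-1 + n, by rw [mk_B, zpow_add, zpow_neg_one]⟩
    · exact ⟨1 + n, by rw [mk_b, zpow_add, zpow_one]⟩

theorem of_cr (w : F) (L) (h : FreeGroup.IsCyclicallyReduced L) (hc : IsConj w (FreeGroup.mk L)) :
    (∃ n : ℤ, IsConj w (gb ^ n)) ∨ ∃ e K M G, L = K ++ (0, e) :: M ∧ ok e G ∧ fin' e G = e ∧
      fl e G = (0, e) :: (M ++ K) ∧ IsConj w (FreeGroup.mk (fl e G)) := by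
  by_cases hb : ∀ x ∈ L, x.1 ≠ 0
  · left
    obtain ⟨n, hn⟩ := all_b L hb
    exact ⟨n, hn ▸ hc⟩
  · right
    push Not at hb
    obtain ⟨⟨i, e⟩, hx, hi⟩ := hb
    simp only at hi
    subst hi
    obtain ⟨K, M, rfl⟩ := List.append_of_mem hx
    rw [cr_iff] at h
    obtain ⟨G, h1, h2, h3⟩ := to_gap (M ++ K) e 0 e (h.infix ⟨K, M, by simp [bpow]⟩)
    have h4 : fl e G = (0, e) :: (M ++ K) := by
      apply List.append_cancel_right (bs := [(0, e)])
      rw [h3]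
      simp [bpow]
    refine ⟨e, K, M, G, rfl, h1, h2, h4, ?_⟩
    rw [h4]
    exact hc.trans (isConj_rot K ((0, e) :: M))

/-- The state of a conjugacy class. -/
def St (w : F) (m : ℕ) : Prop :=
  (∃ n : ℤ, IsConj w (gb ^ n)) ∨
    ∃ e G, ok e G ∧ fin' e G = e ∧ IsConj w (FreeGroup.mk (fl e G)) ∧ NG e G ≤ m

theorem St_start (u : F) : St u (cyclen u) := by
  obtain ⟨L, hL, hc⟩ := exists_cr u
  rcases of_cr u L hL hc with h | ⟨e, K, M, G, h1, h2, h3, h4, h5⟩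
  · exact Or.inl h
  · refine Or.inr ⟨e, G, h2, h3, h5, ?_⟩
    rw [cyclen_eq_of_isConj h5, cyclen_mk (fl_cr e G h2 h3)]
    exact NG_le_length e G

theorem σ_conj_sh (w : F) (e G) (hf : fin' e G = e) (hc : IsConj w (FreeGroup.mk (fl e G))) :
    IsConj (σ w) (FreeGroup.mk (fl e (sh e G))) := by
  refine (isConj_aut σ hc).trans ?_
  rw [σ_fl, hf]
  exact (isConj_iff.2 ⟨lam e, rfl⟩).symm

theorem σ_conj_b (w : F) (n : ℤ) (hc : IsConj w (gb ^ n)) : IsConj (σ w) (gb ^ n) := by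
  have := isConj_aut σ hc
  rwa [map_zpow, σ_b] at this

theorem St_σ (w : F) (m : ℕ) (h : St w m) : St (σ w) (m - 1) := by
  rcases h with ⟨n, hn⟩ | ⟨e, G, h1, h2, h3, h4⟩
  · exact Or.inl ⟨n, σ_conj_b w n hn⟩
  · refine Or.inr ⟨e, sh e G, ok_sh e G h1, by rw [fin'_sh, h2], σ_conj_sh w e G h2 h3, ?_⟩
    have := NG_sh_lt e G
    have := NG_sh_le e G
    omega

theorem fl_pos (k : ℕ) : ok true (List.replicate k (1, true)) ∧
    fin' true (List.replicate k (1, true)) = true ∧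
    FreeGroup.mk (fl true (List.replicate k (1, true))) = (ga * gb) ^ k ∧
    NG true (List.replicate k (1, true)) = 0 := by
  induction k with
  | zero => simp [ok, fin', fl, NG, FreeGroup.one_eq_mk]
  | succ k ih =>
    rw [List.replicate_succ]
    refine ⟨⟨by simp, ih.1⟩, ih.2.1, ?_, ?_⟩
    · simp only [fl]
      rw [mk_cons, ← FreeGroup.mul_mk, ih.2.2.1, bpow_mk, mk_a, pow_succ', zpow_one, mul_assoc]
    · simp [NG, ih.2.2.2, ng, dl]

theorem fl_neg (k : ℕ) : ok false (List.replicate k (-1, false)) ∧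
    fin' false (List.replicate k (-1, false)) = false ∧
    FreeGroup.mk (fl false (List.replicate k (-1, false))) = (ga⁻¹ * gb⁻¹) ^ k ∧
    NG false (List.replicate k (-1, false)) = 0 := by
  induction k with
  | zero => simp [ok, fin', fl, NG, FreeGroup.one_eq_mk]
  | succ k ih =>
    rw [List.replicate_succ]
    refine ⟨⟨by simp, ih.1⟩, ih.2.1, ?_, ?_⟩
    · simp only [fl]
      rw [mk_cons, ← FreeGroup.mul_mk, ih.2.2.1, bpow_mk, mk_A, pow_succ', zpow_neg_one, mul_assoc]
    · simp [NG, ih.2.2.2, ng, dl]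

theorem rep_shift (x : Fin 2 × Bool) (L) (k : ℕ) :
    x :: (List.replicate k (L ++ [x])).flatten = (List.replicate k (x :: L)).flatten ++ [x] := by
  induction k with
  | zero => simp
  | succ k ih => 
    simp only [List.replicate_succ, List.flatten_cons, List.append_assoc, List.cons_append,
      List.nil_append, ih]

theorem JJ_rep (x : Fin 2 × Bool) (L) (k : ℕ) :
    JJ x (List.replicate k (L ++ [x])).flatten = (List.replicate k (JJ x (L ++ [x]))).flatten := by
  induction k with
  | zero => simp [JJ]
  | succ k ih =>
    simp only [List.replicate_succ, List.flatten_cons, List.append_assoc, List.cons_append,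
      List.nil_append]
    rw [JJ_append, ih]

theorem FF_rep' (e : Bool) (L) (k : ℕ) :
    FF (some e) 0 (List.replicate k (L ++ [(0, e)])).flatten =
      k * FF (some e) 0 (L ++ [(0, e)]) := by
  induction k with
  | zero => simp [FF]
  | succ k ih =>
    simp only [List.replicate_succ, List.flatten_cons, List.append_assoc, List.cons_append,
      List.nil_append]
    rw [FF_split, ih]
    ring

theorem FF_low (y : Bool) (K M) (k : ℕ) :
    k * FF (some y) 0 (M ++ K ++ [(0, y)]) ≤
      FF (some y) 0 (M ++ (List.replicate k (K ++ (0, y) :: M)).flatten) := by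
  induction k with
  | zero => simp
  | succ k ih =>
    have : M ++ (List.replicate (k + 1) (K ++ (0, y) :: M)).flatten =
      (M ++ K) ++ (0, y) :: (M ++ (List.replicate k (K ++ (0, y) :: M)).flatten) := by
      simp [List.replicate_succ]
    have h2 := FF_split (some y) 0 (M ++ K) y
      (M ++ (List.replicate k (K ++ (0, y) :: M)).flatten)
    rw [this, h2, add_mul]
    omega

theorem St_τ (w : F) (m : ℕ) (h : St w m) : St (τ w) m := by
  rcases h with ⟨n, hn⟩ | ⟨e, G, h1, h2, h3, h4⟩
  · right
    have hc := isConj_aut τ hn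
    rw [map_zpow, τ_b] at hc
    rcases n with k | k
    · obtain ⟨p1, p2, p3, p4⟩ := fl_pos k
      refine ⟨true, _, p1, p2, ?_, by rw [p4]; omega⟩
      rw [p3]
      refine hc.trans (isConj_iff.2 ⟨gb⁻¹, ?_⟩)
      simp only [Int.ofNat_eq_natCast, zpow_natCast]
      have : ga * gb = gb⁻¹ * (gb * ga) * gb⁻¹⁻¹ := by group
      rw [this, conj_pow]
    · obtain ⟨p1, p2, p3, p4⟩ := fl_neg (k + 1)
      refine ⟨false, _, p1, p2, ?_, by rw [p4]; omega⟩
      rw [p3]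
      rw [zpow_negSucc, ← inv_pow, mul_inv_rev] at hc
      exact hc
  · rcases G with _ | ⟨g, G⟩
    · left
      refine ⟨0, ?_⟩
      have := isConj_aut τ h3
      simpa [fl, ← FreeGroup.one_eq_mk] using this
    · obtain ⟨L0, hL0⟩ : ∃ L0, fl e (g :: G) = (0, e) :: L0 := ⟨_, rfl⟩
      have hcr := fl_cr e (g :: G) h1 h2
      obtain ⟨Y, hY, hN⟩ := FF_fl e (g :: G)
      rw [hL0] at h3 hcr hY
      rw [h2] at hY
      have hY : Y = L0 ++ [(0, e)] := by simpa using hY.symm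
      subst hY
      rw [← hN] at h4
      clear hN hL0 h1 h2
      have hred : ∀ k, FreeGroup.IsReduced
          ((0, e) :: (List.replicate k (L0 ++ [(0, e)])).flatten) := by
        intro k
        rw [rep_shift]
        have := (hcr.flatten_replicate (k + 1)).isReduced
        rw [List.replicate_succ', List.flatten_append] at this
        exact this.infix ⟨[], L0, by simp⟩
      set V := JJ (0, e) (L0 ++ [(0, e)]) with hV
      have hVcr : FreeGroup.IsCyclicallyReduced V := by
        rw [cr_iff]
        have := (JJ_red _ _ (hred 2)).1
        rw [JJ_rep] at this
        simpa [List.replicate_succ] using this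
      have hVc : IsConj (τ w) (FreeGroup.mk V) := (isConj_aut τ h3).trans (JJ_conj _ _)
      rcases of_cr (τ w) V hVcr hVc with h | ⟨y, K, M, G', q1, q2, q3, q4, q5⟩
      · exact Or.inl h
      · refine Or.inr ⟨y, G', q2, q3, q5, le_trans ?_ h4⟩
        obtain ⟨Y', hY', hN'⟩ := FF_fl y G'
        rw [q3, q4] at hY'
        have hY' : Y' = M ++ K ++ [(0, y)] := by simpa using hY'.symm
        rw [← hN', hY']
        have key : ∀ k : ℕ, k * FF (some y) 0 (M ++ K ++ [(0, y)]) ≤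
            (k + 1) * FF (some e) 0 (L0 ++ [(0, e)]) := by
          intro k
          have a1 := FF_low y K M k
          have a2 := FF_JJ _ _ (hred (k + 1)) none 0 (some e) 0 (by
            cases e <;> simp [SInv])
          rw [JJ_rep, FF_rep', ← hV, q1, List.replicate_succ, List.flatten_cons,
            List.append_assoc, List.cons_append, FF_split] at a2
          omega
        have := key (FF (some e) 0 (L0 ++ [(0, e)]) + 1)
        by_contra hlt
        push Not at hlt
        nlinarith

theorem St_σ_pow (w : F) (m l : ℕ) (h : St w m) : St ((σ ^ l) w) (m - l) := by
  induction l with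
  | zero => simpa using h
  | succ l ih =>
    rw [pow_succ', MulAut.mul_apply]
    have := St_σ _ _ ih
    rwa [Nat.sub_sub] at this

theorem St_τ_pow (w : F) (m l : ℕ) (h : St w m) : St ((τ ^ l) w) m := by
  induction l with
  | zero => simpa using h
  | succ l ih =>
    rw [pow_succ', MulAut.mul_apply]
    exact St_τ _ _ ih

theorem St_chain (u : F) (m : ℕ) (h : St u m) (c : List (ℕ × ℕ)) :
    St (chainC1 c u) (m - sigmaCount c) := by
  induction c with
  | nil => simpa [chainC1, sigmaCount] using h
  | cons p c ih =>
    have e1 : chainC1 (p :: c) u = (τ ^ p.2) ((σ ^ p.1) (chainC1 c u)) := by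
      simp [chainC1]
    have e2 : m - sigmaCount (p :: c) = m - sigmaCount c - p.1 := by
      simp [sigmaCount]; omega
    rw [e1, e2]
    exact St_τ_pow _ _ _ (St_σ_pow _ _ _ ih)

theorem linear_growth (w : F) (h : St w 0) :
    ∃ k : ℕ, ∀ i : ℕ, cyclen ((σ ^ (i + 1)) w) = cyclen ((σ ^ i) w) + k := by
  rcases h with ⟨n, hn⟩ | ⟨e, G, h1, h2, h3, h4⟩
  · refine ⟨0, fun i => ?_⟩
    have hc : ∀ i : ℕ, IsConj ((σ ^ i) w) (gb ^ n) := by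
      intro i
      induction i with
      | zero => simpa using hn
      | succ i ih =>
        rw [pow_succ', MulAut.mul_apply]
        exact σ_conj_b _ n ih
    rw [cyclen_eq_of_isConj (hc i), cyclen_eq_of_isConj (hc (i + 1))]
    rfl
  · refine ⟨KG e G, fun i => ?_⟩
    have hc : ∀ i : ℕ, ∃ G', ok e G' ∧ fin' e G' = e ∧
        IsConj ((σ ^ i) w) (FreeGroup.mk (fl e G')) ∧ NG e G' = 0 ∧ KG e G' = KG e G := by
      intro i
      induction i with
      | zero => exact ⟨G, h1, h2, by simpa using h3, by omega, rfl⟩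
      | succ i ih =>
        obtain ⟨G', r1, r2, r3, r4, r5⟩ := ih
        refine ⟨sh e G', ok_sh e G' r1, by rw [fin'_sh, r2], ?_, ?_, by rw [KG_sh, r5]⟩
        · rw [pow_succ', MulAut.mul_apply]
          exact σ_conj_sh _ e G' r2 r3
        · have := NG_sh_le e G'
          omega
    obtain ⟨G', r1, r2, r3, r4, r5⟩ := hc i
    rw [pow_succ', MulAut.mul_apply, cyclen_eq_of_isConj (σ_conj_sh _ e G' r2 r3),
      cyclen_eq_of_isConj r3, cyclen_mk (fl_cr e G' r1 r2),
      cyclen_mk (fl_cr e _ (ok_sh e G' r1) (by rw [fin'_sh, r2])), length_sh e G' r4, r5]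

/-- Lemma 4.3.3. -/
theorem stmt6 (u : F) (c : List (ℕ × ℕ)) (hne : c ≠ [])
    (hσ : cyclen u + 1 ≤ sigmaCount c) :
    (cyclen (σ (chainC1 c u)) = cyclen (chainC1 c u) →
      ∀ i : ℕ, cyclen ((σ ^ (i + 1)) (chainC1 c u)) = cyclen ((σ ^ i) (chainC1 c u))) ∧
    ((∃ j : ℕ, cyclen ((σ ^ (j + 1)) (chainC1 c u)) = cyclen ((σ ^ j) (chainC1 c u))) →
      cyclen (σ (chainC1 c u)) = cyclen (chainC1 c u)) := by
  have h0 : St (chainC1 c u) 0 := by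
    have := St_chain u _ (St_start u) c
    rwa [show cyclen u - sigmaCount c = 0 by omega] at this
  obtain ⟨k, hk⟩ := linear_growth _ h0
  have hk0 := hk 0
  simp only [zero_add, pow_one, pow_zero, MulAut.one_apply] at hk0
  constructor
  · intro h i
    have := hk i
    omega
  · rintro ⟨j, hj⟩
    have := hk j
    omega
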